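/- Curve-factoring lemma (Gromov): Let (M, g) be a Riemannian manifold, let p ∈ M, let t > 0, and let γ be any 1-cycle (with Z/2 coefficients) contained in the metric ball B(p, t). Then for every ε > 0, γ is homologous in B(p, t) to a sum Σ_i γ_i of closed loops, where each γ_i has length at most 2t + ε. -/

import Mathlib

/-!
Formalization of a statement from L. Guth, "Systolic inequalities and minimal hypersurfaces"
(arXiv:0903.5299).

Since Mathlib does not have Riemannian metrics, a Riemannian metric `g` on a closed manifold
is encoded by its geodesic distance function: a (length/intrinsic) metric space structure.
Lengths of curves are computed from the distance as the total variation, which for the geodesic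
distance of a Riemannian metric agrees with the Riemannian length.  The `d`-dimensional
Riemannian volume is encoded as the `d`-dimensional Hausdorff measure (with the normalization
constant `ω_d/2^d` making it agree with the Riemannian volume on `d`-dimensional Riemannian
submanifolds).
-/

open MeasureTheory Metric Set
open scoped ENNReal

noncomputable section

/-- The length (total variation, i.e. arclength) of a path in an (extended) metric space.
For a path in a Riemannian manifold, computing it with respect to the geodesic distance
gives the Riemannian length of the path. -/
def pathLength {X : Type} [PseudoEMetricSpace X] {x y : X} (γ : Path x y) : ℝ≥0∞ :=
  eVariationOn (fun t => γ t) Set.univ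

/-- A metric is a length (intrinsic) metric: the distance between two points is the infimum
of the lengths of paths joining them.  The geodesic distance of a Riemannian metric is a
length metric. -/
def IsLengthMetric (X : Type) [PseudoEMetricSpace X] : Prop :=
  ∀ x y : X, edist x y = ⨅ γ : Path x y, pathLength γ

/-- The systole of a space: the infimum of the lengths of all non-contractible closed curves. -/
def systole (X : Type) [PseudoEMetricSpace X] : ℝ≥0∞ :=
  ⨅ (x : X) (γ : Path x x) (_ : ¬γ.Homotopic (Path.refl x)), pathLength γ

/-- The volume `ω_d = π^(d/2)/Γ(d/2+1)` of the Euclidean unit ball in dimension `d`. -/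
def unitBallVolume (d : ℕ) : ℝ≥0∞ :=
  ENNReal.ofReal (Real.pi ^ ((d : ℝ) / 2) / Real.Gamma ((d : ℝ) / 2 + 1))

/-- The `d`-dimensional Riemannian volume of a subset of a metric space: the `d`-dimensional
Hausdorff measure, normalized (à la Federer, by `ω_d/2^d`) so that it agrees with the
Riemannian volume on `d`-dimensional Riemannian manifolds and their `d`-dimensional
submanifolds. -/
def rvol (d : ℕ) {X : Type} [EMetricSpace X] [MeasurableSpace X] [BorelSpace X]
    (s : Set X) : ℝ≥0∞ :=
  (unitBallVolume d / 2 ^ d) * μH[(d : ℝ)] s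

/-- The data of singular cohomology with `ℤ/2` coefficients, together with the structure
maps used in this paper: the zero class, pullbacks along continuous maps, cup products,
the evaluation pairing of degree-one classes against loops (and hence against 1-cycles),
and Poincaré duality between degree-one classes and embedded hypersurfaces. -/
structure Z2Cohomology : Type 1 where
  /-- `H k X` : the degree-`k` cohomology of the space `X` with `ℤ/2` coefficients. -/
  H : (k : ℕ) → (X : Type) → [TopologicalSpace X] → Type
  /-- the zero cohomology class -/
  zero : ∀ {k : ℕ} {X : Type} [TopologicalSpace X], H k X
  /-- contravariant functoriality: pullback along continuous maps -/
  map : ∀ {k : ℕ} {X Y : Type} [TopologicalSpace X] [TopologicalSpace Y],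
    C(X, Y) → H k Y → H k X
  map_id : ∀ {k : ℕ} {X : Type} [TopologicalSpace X] (a : H k X),
    map (ContinuousMap.id X) a = a
  map_comp : ∀ {k : ℕ} {X Y Z : Type} [TopologicalSpace X] [TopologicalSpace Y]
    [TopologicalSpace Z] (f : C(X, Y)) (g : C(Y, Z)) (a : H k Z),
    map (g.comp f) a = map f (map g a)
  map_zero : ∀ {k : ℕ} {X Y : Type} [TopologicalSpace X] [TopologicalSpace Y] (f : C(X, Y)),
    map f (zero (k := k)) = zero
  /-- homotopy invariance of cohomology -/
  map_congr : ∀ {k : ℕ} {X Y : Type} [TopologicalSpace X] [TopologicalSpace Y]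
    (f g : C(X, Y)), f.Homotopic g → ∀ a : H k Y, map f a = map g a
  /-- the cup product -/
  cup : ∀ {k l : ℕ} {X : Type} [TopologicalSpace X], H k X → H l X → H (k + l) X
  map_cup : ∀ {k l : ℕ} {X Y : Type} [TopologicalSpace X] [TopologicalSpace Y]
    (f : C(X, Y)) (a : H k Y) (b : H l Y), map f (cup a b) = cup (map f a) (map f b)
  /-- evaluation of a degree-one cohomology class on a loop -/
  evalLoop : ∀ {X : Type} [TopologicalSpace X] {x : X}, H 1 X → Path x x → ZMod 2
  evalLoop_zero : ∀ {X : Type} [TopologicalSpace X] (x : X) (γ : Path x x),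
    evalLoop zero γ = 0
  /-- the pairing with loops is homotopy invariant -/
  evalLoop_congr : ∀ {X : Type} [TopologicalSpace X] {x : X} (α : H 1 X) (γ γ' : Path x x),
    γ.Homotopic γ' → evalLoop α γ = evalLoop α γ'
  /-- the pairing with loops is additive under concatenation of loops -/
  evalLoop_trans : ∀ {X : Type} [TopologicalSpace X] {x : X} (α : H 1 X) (γ γ' : Path x x),
    evalLoop α (γ.trans γ') = evalLoop α γ + evalLoop α γ'
  /-- naturality of the pairing with loops -/
  evalLoop_map : ∀ {X Y : Type} [TopologicalSpace X] [TopologicalSpace Y]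
    (f : C(X, Y)) {x : X} (α : H 1 Y) (γ : Path x x),
    evalLoop (map f α) γ = evalLoop α (γ.map f.continuous)
  /-- `IsPoincareDual Z α` : the embedded closed hypersurface `Z` is Poincaré dual to the
  degree-one class `α`, i.e. the mod-2 intersection number of `Z` with any 1-cycle `γ`
  equals `α(γ)`.  Two embedded hypersurfaces are `ℤ/2`-homologous iff they are Poincaré
  dual to the same class. -/
  IsPoincareDual : ∀ {X : Type} [TopologicalSpace X], Set X → H 1 X → Prop
  /-- a loop disjoint from a hypersurface Poincaré dual to `α` has zero mod-2 intersection
  number with it, hence evaluates to zero against `α` -/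
  isPoincareDual_eval : ∀ {X : Type} [TopologicalSpace X] (Z : Set X) (α : H 1 X),
    IsPoincareDual Z α → ∀ (x : X) (γ : Path x x), Set.range γ ∩ Z = ∅ → evalLoop α γ = 0

namespace Z2Cohomology

variable (T : Z2Cohomology)

/-- The iterated cup product `α₁ ∪ ⋯ ∪ αₖ` of a list of degree-one classes
(by convention the unit/zero-fold product of the empty list is not needed here;
for the empty list we return the zero class, but we only ever use nonempty lists). -/
def cupList {X : Type} [TopologicalSpace X] : (l : List (T.H 1 X)) → T.H l.length X
  | [] => T.zero
  | a :: l => T.cup (cupList l) a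

/-- A 1-cycle with `ℤ/2` coefficients: a formal sum (i.e. a finite list) of closed loops. -/
abbrev OneCycle (X : Type) [TopologicalSpace X] : Type := List (Σ x : X, Path x x)

/-- The evaluation `α(c)` of a degree-one cohomology class `α` on a 1-cycle `c`. -/
def cycleEval {X : Type} [TopologicalSpace X] (α : T.H 1 X) (c : OneCycle X) : ZMod 2 :=
  (c.map fun γ => T.evalLoop α γ.2).sum

/-- The length of a 1-cycle: the sum of the lengths of its loops. -/
def cycleLength {X : Type} [PseudoEMetricSpace X] (c : OneCycle X) : ℝ≥0∞ :=
  (c.map fun γ => pathLength γ.2).sum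

/-- The length `L(α)` of a class `α ∈ H¹(X, ℤ/2)`: the smallest length of a
1-cycle `γ` with `α(γ) ≠ 0`. -/
def classLength {X : Type} [PseudoEMetricSpace X] (α : T.H 1 X) : ℝ≥0∞ :=
  ⨅ (c : OneCycle X) (_ : T.cycleEval α c ≠ 0), cycleLength c

end Z2Cohomology

/-- An embedded closed hypersurface in an `n`-dimensional manifold: a closed subset which,
with its subspace topology, is a topological `(n-1)`-manifold. -/
def IsEmbeddedHypersurface {M : Type} [TopologicalSpace M] (n : ℕ) (Z : Set M) : Prop :=
  IsClosed Z ∧ Nonempty (ChartedSpace (EuclideanSpace ℝ (Fin (n - 1))) Z)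

section Aux

open Topology

local notation "I" => unitInterval

lemma aux_eval_cast (T : Z2Cohomology) {X : Type} [TopologicalSpace X] {x y : X}
    (h : y = x) (α : T.H 1 X) (γ : Path x x) :
    T.evalLoop α (γ.cast h h) = T.evalLoop α γ := by
  subst h; rfl

/-- Invariance of the evaluation under change of base point. -/
lemma aux_eval_conj (T : Z2Cohomology) {X : Type} [TopologicalSpace X] {x y : X}
    (α : T.H 1 X) (δ : Path y x) (γ : Path x x) :
    T.evalLoop α ((δ.trans γ).trans δ.symm) = T.evalLoop α γ := by
  obtain ⟨f, rfl, rfl⟩ := δ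
  let ev0 : C(C(I, X), X) := ⟨fun g => g 0, by fun_prop⟩
  let ev1 : C(C(I, X), X) := ⟨fun g => g 1, by fun_prop⟩
  have hev : ev0.Homotopic ev1 := by
    refine ⟨⟨⟨fun q : I × C(I, X) => q.2 q.1, by fun_prop⟩, ?_, ?_⟩⟩
    · intro g; rfl
    · intro g; rfl
  let D : Path f (ContinuousMap.const I (f 1)) :=
    { toFun := (ContinuousMap.curry ⟨fun q : I × I => f (max q.2 q.1), by fun_prop⟩ : C(I, C(I, X)))
      continuous_toFun := ContinuousMap.continuous _
      source' := by
        ext r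
        simp only [ContinuousMap.curry_apply, ContinuousMap.coe_mk]
        rw [max_eq_left (show (0 : I) ≤ r from r.2.1)]
      target' := by
        ext r
        simp only [ContinuousMap.curry_apply, ContinuousMap.coe_mk, ContinuousMap.const_apply]
        rw [max_eq_right (show r ≤ (1 : I) from r.2.2)] }
  let K : Path (ContinuousMap.const I (f 1)) (ContinuousMap.const I (f 1)) :=
    γ.map (f := ContinuousMap.const I) ContinuousMap.continuous_const'
  let G := (D.trans K).trans D.symm
  have h1 : T.evalLoop α (G.map ev0.continuous) = T.evalLoop α (G.map ev1.continuous) := by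
    rw [← T.evalLoop_map, ← T.evalLoop_map, T.map_congr _ _ hev]
  have hD0 : D.map ev0.continuous = (⟨f, rfl, rfl⟩ : Path (f 0) (f 1)) := by
    ext r
    show f (max 0 r) = f r
    rw [max_eq_right (show (0 : I) ≤ r from r.2.1)]
  have hD1 : D.map ev1.continuous = Path.refl (f 1) := by
    ext r
    show f (max 1 r) = f 1
    rw [max_eq_left (show r ≤ (1 : I) from r.2.2)]
  have h0' : G.map ev0.continuous
      = ((⟨f, rfl, rfl⟩ : Path (f 0) (f 1)).trans γ).trans (⟨f, rfl, rfl⟩ : Path (f 0) (f 1)).symm := by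
    simp only [G, Path.map_trans, ← Path.map_symm, hD0]
    rfl
  have h1' : G.map ev1.continuous
      = ((Path.refl (f 1)).trans γ).trans (Path.refl (f 1)).symm := by
    simp only [G, Path.map_trans, ← Path.map_symm, hD1]
    rfl
  have h2 : T.evalLoop α (((Path.refl (f 1)).trans γ).trans (Path.refl (f 1)).symm)
      = T.evalLoop α γ := by
    apply T.evalLoop_congr
    rw [Path.refl_symm]
    exact (Path.Homotopic.trans_refl _).trans (Path.Homotopic.refl_trans _)
  rw [← h2, ← h1', ← h1]
  exact congrArg (T.evalLoop α) h0'.symm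

lemma aux_eval_mul (T : Z2Cohomology) {X : Type} [TopologicalSpace X] {o x y z : X}
    (α : T.H 1 X) (a : Path o x) (b : Path o y) (c : Path o z) (σ : Path x y) (τ : Path y z) :
    T.evalLoop α ((a.trans (σ.trans τ)).trans c.symm) =
      T.evalLoop α ((a.trans σ).trans b.symm) + T.evalLoop α ((b.trans τ).trans c.symm) := by
  rw [← T.evalLoop_trans]
  apply T.evalLoop_congr
  rw [← Path.Homotopic.Quotient.eq]
  simp only [Path.Homotopic.Quotient.mk_trans, Path.Homotopic.Quotient.mk_symm,
    Path.Homotopic.Quotient.trans_assoc]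
  congr 2
  rw [← Path.Homotopic.Quotient.trans_assoc (Path.Homotopic.Quotient.symm _),
    Path.Homotopic.Quotient.symm_trans, Path.Homotopic.Quotient.refl_trans]

lemma aux_len_trans {X : Type} [PseudoEMetricSpace X] {x y z : X} (γ : Path x y) (γ' : Path y z) :
    pathLength (γ.trans γ') ≤ pathLength γ + pathLength γ' := by
  unfold pathLength
  let h : I := ⟨1/2, by norm_num, by norm_num⟩
  have hun : eVariationOn (fun t => (γ.trans γ') t) Set.univ
      = eVariationOn (fun t => (γ.trans γ') t) (Set.Iic h ∪ Set.Ici h) := by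
    rw [Set.Iic_union_Ici]
  rw [hun, eVariationOn.union _ isGreatest_Iic isLeast_Ici]
  gcongr
  · have : EqOn (fun t => (γ.trans γ') t)
        ((fun t => γ t) ∘ fun s : I => Set.projIcc (0:ℝ) 1 zero_le_one (2 * (s:ℝ))) (Iic h) := by
      intro s hs
      have hs' : (s:ℝ) ≤ 1/2 := hs
      simp only [Path.trans_apply, dif_pos hs', Function.comp]
      rw [Set.projIcc_of_mem]
    rw [eVariationOn.eq_of_eqOn this]
    refine eVariationOn.comp_le_of_monotoneOn _ _ ?_ (fun _ _ => mem_univ _)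
    intro a _ b _ hab
    apply Set.monotone_projIcc
    have : (a:ℝ) ≤ b := hab
    linarith
  · have : EqOn (fun t => (γ.trans γ') t)
        ((fun t => γ' t) ∘ fun s : I => Set.projIcc (0:ℝ) 1 zero_le_one (2 * (s:ℝ) - 1)) (Ici h) := by
      intro s hs
      have hs' : 1/2 ≤ (s:ℝ) := hs
      simp only [Function.comp]
      rcases hs'.eq_or_lt with h' | h'
      · have : s = h := Subtype.ext h'.symm
        subst this
        simp [h, Path.trans_apply]
      · simp only [Path.trans_apply, dif_neg (not_le.2 h')]
        rw [Set.projIcc_of_mem]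
    rw [eVariationOn.eq_of_eqOn this]
    refine eVariationOn.comp_le_of_monotoneOn _ _ ?_ (fun _ _ => mem_univ _)
    intro a _ b _ hab
    apply Set.monotone_projIcc
    have : (a:ℝ) ≤ b := hab
    linarith

lemma aux_len_symm {X : Type} [PseudoEMetricSpace X] {x y : X} (γ : Path x y) :
    pathLength γ.symm ≤ pathLength γ := by
  refine eVariationOn.comp_le_of_antitoneOn (fun t => γ t) (fun s : I => unitInterval.symm s) ?_
    (fun _ _ => mem_univ _)
  intro a _ b _ hab
  exact unitInterval.symm_le_symm.2 hab

lemma aux_edist_le {X : Type} [PseudoEMetricSpace X] {x y : X} (γ : Path x y) (s : I) :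
    edist x (γ s) ≤ pathLength γ := by
  have := eVariationOn.edist_le (fun t => γ t) (s := Set.univ) (mem_univ (0 : I)) (mem_univ s)
  simpa [pathLength] using this

lemma aux_local {n : ℕ} {X : Type} [TopologicalSpace X]
    [ChartedSpace (EuclideanSpace ℝ (Fin n)) X] (z : X) :
    ∃ U ∈ 𝓝 z, ∀ (x y : X) (σ τ : Path x y), range σ ⊆ U → range τ ⊆ U → σ.Homotopic τ := by
  let e := chartAt (EuclideanSpace ℝ (Fin n)) z
  have hz : z ∈ e.source := mem_chart_source _ z
  obtain ⟨ρ, hρ, hsub⟩ := Metric.isOpen_iff.1 e.open_target (e z) (e.map_source hz)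
  let B := Metric.ball (e z) ρ
  haveI : ContractibleSpace B :=
    (convex_ball (e z) ρ).contractibleSpace ⟨e z, mem_ball_self hρ⟩
  let h : C(B, X) := ⟨fun w => e.symm w,
    (e.continuousOn_symm.mono hsub).comp_continuous continuous_subtype_val (fun w => w.2)⟩
  refine ⟨e.source ∩ e ⁻¹' B, ?_, ?_⟩
  · exact Filter.inter_mem (e.open_source.mem_nhds hz)
      ((e.continuousAt hz).preimage_mem_nhds (Metric.ball_mem_nhds _ hρ))
  · intro x y σ τ hσ hτ
    have hx := hσ ⟨0, σ.source⟩
    have hy := hσ ⟨1, σ.target⟩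
    have lift : ∀ σ : Path x y, range σ ⊆ e.source ∩ e ⁻¹' B →
        ∃ σ' : Path (⟨e x, hx.2⟩ : B) ⟨e y, hy.2⟩, ∀ s, h (σ' s) = σ s := by
      intro σ hσ
      refine ⟨⟨⟨fun s => ⟨e (σ s), (hσ ⟨s, rfl⟩).2⟩, ?_⟩, ?_, ?_⟩, ?_⟩
      · refine Continuous.subtype_mk ?_ _
        exact e.continuousOn.comp_continuous σ.continuous (fun s => (hσ ⟨s, rfl⟩).1)
      · simp
      · simp
      · intro s
        exact e.left_inv (hσ ⟨s, rfl⟩).1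
    obtain ⟨σ', hσ'⟩ := lift σ hσ
    obtain ⟨τ', hτ'⟩ := lift τ hτ
    have H := ((SimplyConnectedSpace.paths_homotopic σ' τ').map h).pathCast
      (e.left_inv hx.1).symm (e.left_inv hy.1).symm
    have e1 : (σ'.map h.continuous).cast (e.left_inv hx.1).symm (e.left_inv hy.1).symm = σ := by
      ext s; exact hσ' s
    have e2 : (τ'.map h.continuous).cast (e.left_inv hx.1).symm (e.left_inv hy.1).symm = τ := by
      ext s; exact hτ' s
    rw [← e1, ← e2]
    exact H

/-- Short paths in the ball `B(p, t)`. -/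
lemma aux_short {M : Type} [MetricSpace M] (hM : IsLengthMetric M) {S : Set M} (x y : S) (r : ℝ)
    (hd : dist (x : M) y < r) (hS : Metric.ball (x : M) r ⊆ S) :
    ∃ γ : Path x y, pathLength γ < ENNReal.ofReal r ∧ ∀ s, dist (γ s) x < r := by
  have hr : 0 < r := dist_nonneg.trans_lt hd
  have h1 : edist (x : M) y < ENNReal.ofReal r := by
    rw [edist_dist]; exact (ENNReal.ofReal_lt_ofReal_iff hr).2 hd
  rw [hM] at h1
  obtain ⟨γ, hγ⟩ := iInf_lt_iff.1 h1
  have hb : ∀ s, dist (γ s) x < r := by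
    intro s
    have := (aux_edist_le γ s).trans_lt hγ
    rw [edist_dist, ENNReal.ofReal_lt_ofReal_iff hr] at this
    rwa [dist_comm]
  refine ⟨⟨⟨fun s => ⟨γ s, hS (hb s)⟩, by fun_prop⟩, ?_, ?_⟩, ?_, ?_⟩
  · simp
  · simp
  · exact hγ
  · intro s; exact hb s

/-- The path `σ`, closed up with the chosen paths `δ`, is homologous to a sum of short loops. -/
def AuxP (T : Z2Cohomology) {X : Type} [PseudoEMetricSpace X] {o : X} (δ : ∀ x : X, Path o x)
    (L : ℝ≥0∞) {x y : X} (σ : Path x y) : Prop :=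
  ∃ c' : Z2Cohomology.OneCycle X, (∀ γ ∈ c', pathLength γ.2 ≤ L) ∧
    ∀ α : T.H 1 X, T.evalLoop α (((δ x).trans σ).trans (δ y).symm) = T.cycleEval α c'

lemma AuxP.trans {T : Z2Cohomology} {X : Type} [PseudoEMetricSpace X] {o : X}
    {δ : ∀ x : X, Path o x} {L : ℝ≥0∞} {x y z : X} {σ : Path x y} {τ : Path y z}
    (h1 : AuxP T δ L σ) (h2 : AuxP T δ L τ) : AuxP T δ L (σ.trans τ) := by
  obtain ⟨c1, h1, h1'⟩ := h1
  obtain ⟨c2, h2, h2'⟩ := h2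
  refine ⟨c1 ++ c2, ?_, ?_⟩
  · intro γ hγ
    rcases List.mem_append.1 hγ with h | h
    · exact h1 γ h
    · exact h2 γ h
  · intro α
    rw [aux_eval_mul T α (δ x) (δ y) (δ z), h1', h2']
    simp [Z2Cohomology.cycleEval]

lemma AuxP.congr {T : Z2Cohomology} {X : Type} [PseudoEMetricSpace X] {o : X}
    {δ : ∀ x : X, Path o x} {L : ℝ≥0∞} {x y : X} {σ τ : Path x y}
    (h : σ.Homotopic τ) (h1 : AuxP T δ L σ) : AuxP T δ L τ := by
  obtain ⟨c1, h1, h1'⟩ := h1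
  refine ⟨c1, h1, fun α => ?_⟩
  rw [← h1']
  apply T.evalLoop_congr
  exact (((Path.Homotopic.refl _).hcomp h).hcomp (Path.Homotopic.refl _)).symm

lemma AuxP.of_cast {T : Z2Cohomology} {X : Type} [PseudoEMetricSpace X] {o : X}
    {δ : ∀ x : X, Path o x} {L : ℝ≥0∞} {x y x' y' : X} {σ : Path x y} (hx : x' = x) (hy : y' = y)
    (h1 : AuxP T δ L (σ.cast hx hy)) : AuxP T δ L σ := by
  subst hx hy
  exact h1

lemma AuxP.short {T : Z2Cohomology} {X : Type} [PseudoEMetricSpace X] {o : X}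
    {δ : ∀ x : X, Path o x} {t ε : ℝ} (ht : 0 < t) (hε : 0 < ε)
    (hδ : ∀ x, pathLength (δ x) ≤ ENNReal.ofReal t)
    {x y : X} {σ : Path x y} (h : pathLength σ ≤ ENNReal.ofReal ε) :
    AuxP T δ (ENNReal.ofReal (2 * t + ε)) σ := by
  refine ⟨[⟨o, ((δ x).trans σ).trans (δ y).symm⟩], ?_, ?_⟩
  · intro γ hγ
    rw [List.mem_singleton] at hγ
    subst hγ
    calc pathLength (((δ x).trans σ).trans (δ y).symm)
        ≤ pathLength ((δ x).trans σ) + pathLength (δ y).symm := aux_len_trans _ _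
      _ ≤ (pathLength (δ x) + pathLength σ) + pathLength (δ y) :=
          add_le_add (aux_len_trans _ _) (aux_len_symm _)
      _ ≤ (ENNReal.ofReal t + ENNReal.ofReal ε) + ENNReal.ofReal t :=
          add_le_add (add_le_add (hδ x) h) (hδ y)
      _ = ENNReal.ofReal (2 * t + ε) := by
          rw [← ENNReal.ofReal_add ht.le hε.le, ← ENNReal.ofReal_add (by positivity) ht.le]
          congr 1; ring
  · intro α
    simp [Z2Cohomology.cycleEval]

lemma AuxP.all {n : ℕ} {T : Z2Cohomology} {M : Type} [MetricSpace M]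
    [ChartedSpace (EuclideanSpace ℝ (Fin n)) M] (hM : IsLengthMetric M) (p : M) (t : ℝ) (ht : 0 < t)
    (ε : ℝ) (hε : 0 < ε) {o : Metric.ball p t} {δ : ∀ x : Metric.ball p t, Path o x}
    (hδ : ∀ x, pathLength (δ x) ≤ ENNReal.ofReal t) {x y : Metric.ball p t} (σ : Path x y) :
    AuxP T δ (ENNReal.ofReal (2 * t + ε)) σ := by
  letI : ChartedSpace (EuclideanSpace ℝ (Fin n)) (Metric.ball p t) :=
    inferInstanceAs (ChartedSpace (EuclideanSpace ℝ (Fin n))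
      (⟨Metric.ball p t, Metric.isOpen_ball⟩ : TopologicalSpace.Opens M))
  -- a good radius around each point
  have key : ∀ z : Metric.ball p t, ∃ r > 0, ∀ (x y : Metric.ball p t) (σ : Path x y),
      range σ ⊆ Metric.ball z r → AuxP T δ (ENNReal.ofReal (2 * t + ε)) σ := by
    intro z
    obtain ⟨U, hU, hUh⟩ := aux_local (n := n) z
    obtain ⟨r1, hr1, hr1U⟩ := Metric.mem_nhds_iff.1 hU
    obtain ⟨r2, hr2, hr2U⟩ := Metric.isOpen_iff.1 (Metric.isOpen_ball (x := p) (ε := t)) z z.2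
    let r := min (min r1 r2 / 3) (ε / 2)
    have hr : 0 < r := by positivity
    have hra : 3 * r ≤ r1 := by
      have h1 : r ≤ min r1 r2 / 3 := min_le_left _ _
      have h2 : min r1 r2 ≤ r1 := min_le_left _ _
      linarith
    have hrb : 3 * r ≤ r2 := by
      have h1 : r ≤ min r1 r2 / 3 := min_le_left _ _
      have h2 : min r1 r2 ≤ r2 := min_le_right _ _
      linarith
    have hrc : 2 * r ≤ ε := by
      have h1 : r ≤ ε / 2 := min_le_right _ _
      linarith
    refine ⟨r, hr, ?_⟩
    intro x y σ hσ
    have hx : dist x z < r := hσ ⟨0, σ.source⟩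
    have hy : dist y z < r := hσ ⟨1, σ.target⟩
    have hxy : dist x y < 2 * r := by
      have := dist_triangle_right x y z
      linarith
    obtain ⟨τ, hτl, hτ⟩ := aux_short hM x y (2 * r) hxy (by
      intro w hw
      apply hr2U
      rw [Metric.mem_ball] at hw ⊢
      have h1 := dist_triangle w (x : M) z
      have h2 : dist (x : M) z < r := hx
      linarith)
    refine AuxP.congr (σ := τ) ?_ (AuxP.short ht hε hδ (hτl.le.trans (ENNReal.ofReal_le_ofReal hrc)))
    refine hUh x y τ σ ?_ ?_
    · rintro _ ⟨s, rfl⟩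
      apply hr1U
      rw [Metric.mem_ball]
      have h1 := dist_triangle (τ s) x z
      have h2 := hτ s
      linarith
    · refine hσ.trans (subset_trans ?_ hr1U)
      apply Metric.ball_subset_ball
      linarith
  choose r hr hkey using key
  obtain ⟨u, hu0, humono, ⟨N, hN⟩, hu⟩ :=
    exists_monotone_Icc_subset_open_cover_unitInterval
      (c := fun z : Metric.ball p t => σ ⁻¹' Metric.ball z (r z))
      (fun z => Metric.isOpen_ball.preimage σ.continuous)
      (fun s _ => mem_iUnion.2 ⟨σ s, Metric.mem_ball_self (hr _)⟩)
  have step : ∀ k, AuxP T δ (ENNReal.ofReal (2 * t + ε)) (σ.subpath 0 (u k)) := by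
    intro k
    induction k with
    | zero =>
      rw [hu0]
      apply hkey (σ 0)
      rw [Path.subpath_self]
      rintro _ ⟨s, rfl⟩
      exact Metric.mem_ball_self (hr _)
    | succ k ih =>
      obtain ⟨z, hz⟩ := hu k
      refine AuxP.congr ⟨Path.Homotopy.subpathTransSubpath σ 0 (u k) (u (k+1))⟩ (ih.trans ?_)
      apply hkey z
      rw [Path.range_subpath_of_le _ _ _ (humono (Nat.le_succ k))]
      exact image_subset_iff.2 hz
  have h := step N
  rw [hN N le_rfl, Path.subpath_zero_one] at h
  exact h.of_cast

end Aux

/-- **Curve-factoring lemma (Gromov).**  Let `(M, g)` be a Riemannian manifold, `p ∈ M`,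
`t > 0`, and let `γ` be any 1-cycle (a formal sum of closed loops, with `ℤ/2` coefficients)
contained in the metric ball `B(p, t)`.  Then for every `ε > 0`, `γ` is homologous inside
`B(p, t)` to a sum `Σᵢ γᵢ` of closed loops, each of length at most `2t + ε`.

Being `ℤ/2`-homologous inside `B(p, t)` is expressed via the (universal-coefficient) pairing:
two 1-cycles in `B(p, t)` are `ℤ/2`-homologous iff every class in `H¹(B(p, t), ℤ/2)`
evaluates equally on them. -/
theorem curve_factoring_lemma (n : ℕ) (T : Z2Cohomology)
    (M : Type) [MetricSpace M] [ChartedSpace (EuclideanSpace ℝ (Fin n)) M]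
    (hM : IsLengthMetric M) (p : M) (t : ℝ) (ht : 0 < t)
    (c : Z2Cohomology.OneCycle ↑(Metric.ball p t)) (ε : ℝ) (hε : 0 < ε) :
    ∃ c' : Z2Cohomology.OneCycle ↑(Metric.ball p t),
      (∀ γ ∈ c', pathLength γ.2 ≤ ENNReal.ofReal (2 * t + ε)) ∧
      ∀ α : T.H 1 ↑(Metric.ball p t), T.cycleEval α c = T.cycleEval α c' := by
  let o : Metric.ball p t := ⟨p, Metric.mem_ball_self ht⟩
  have hδ : ∀ x : Metric.ball p t, ∃ γ : Path o x, pathLength γ ≤ ENNReal.ofReal t := by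
    intro x
    obtain ⟨γ, h, -⟩ := aux_short hM o x t (by rw [dist_comm]; exact x.2) (subset_refl _)
    exact ⟨γ, h.le⟩
  choose δ hδ using hδ
  induction c with
  | nil => exact ⟨[], by simp, fun α => rfl⟩
  | cons γ c ih =>
    obtain ⟨c1, h1, h1'⟩ := ih
    obtain ⟨c2, h2, h2'⟩ := AuxP.all (T := T) (n := n) hM p t ht ε hε hδ γ.2
    refine ⟨c2 ++ c1, ?_, ?_⟩
    · intro γ' hγ
      rcases List.mem_append.1 hγ with h | h
      · exact h2 γ' h
      · exact h1 γ' h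
    · intro α
      have h3 := h2' α
      rw [aux_eval_conj] at h3
      have h4 := h1' α
      simp only [Z2Cohomology.cycleEval, List.map_cons, List.sum_cons, List.map_append,
        List.sum_append] at h3 h4 ⊢
      rw [h3, h4]


end
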